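/- arXiv:2009.14610 — 4 statements merged into one kernel-verified Lean document; each statement's English description precedes it below -/
import Mathlib

section
/- Let X be a random variable following a Poisson distribution with parameter λ > 0, and let M = max(1, λe). Then for every natural number k, the k-th moment of X satisfies E[X^k] ≤ k! · M^k. -/
theorem poisson_moment_aux (lam : ℝ) (hlam : 0 < lam) (M : ℝ)
    (h1 : 1 ≤ M) (h2 : lam * Real.exp 1 ≤ M) (k : ℕ) :
    ∃ s : ℝ, HasSum (fun n : ℕ => (n : ℝ) ^ k * (Real.exp (-lam) * lam ^ n / n.factorial)) s ∧
      s ≤ (k.factorial : ℝ) * M ^ k := by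
  induction k using Nat.strong_induction_on with
  | _ k ih =>
    rcases k with _ | k
    · refine ⟨1, ?_, by simp⟩
      simp only [pow_zero, one_mul]
      exact ProbabilityTheory.hasSum_one_poissonMeasure ⟨lam, hlam.le⟩
    · have ih' : ∀ j : ℕ, ∃ s : ℝ, j ≤ k → HasSum (fun n : ℕ => (n : ℝ) ^ j *
          (Real.exp (-lam) * lam ^ n / n.factorial)) s ∧ s ≤ (j.factorial : ℝ) * M ^ j := by
        intro j
        by_cases hj : j ≤ k
        · obtain ⟨s, hs⟩ := ih j (by omega)
          exact ⟨s, fun _ => hs⟩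
        · exact ⟨0, fun h => absurd h hj⟩
      choose s hs using ih'
      refine ⟨lam * ∑ j ∈ Finset.range (k + 1), (k.choose j : ℝ) * s j, ?_, ?_⟩
      · have hsum : HasSum (fun n : ℕ => lam * ∑ j ∈ Finset.range (k + 1), (k.choose j : ℝ) *
            ((n : ℝ) ^ j * (Real.exp (-lam) * lam ^ n / n.factorial)))
            (lam * ∑ j ∈ Finset.range (k + 1), (k.choose j : ℝ) * s j) := by
          apply HasSum.mul_left
          apply hasSum_sum
          intro j hj
          exact ((hs j (by simpa [Nat.lt_succ_iff] using hj)).1).mul_left _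
        rw [← hasSum_nat_add_iff' 1]
        simp only [Finset.sum_range_one, Nat.cast_zero, ne_eq, Nat.succ_ne_zero,
          not_false_eq_true, zero_pow, zero_mul, sub_zero]
        refine (congrArg (fun f : ℕ → ℝ => HasSum f _) (funext fun n => ?_)).mpr hsum
        have : ∑ j ∈ Finset.range (k + 1), (k.choose j : ℝ) *
            ((n : ℝ) ^ j * (Real.exp (-lam) * lam ^ n / n.factorial))
            = ((n : ℝ) + 1) ^ k * (Real.exp (-lam) * lam ^ n / n.factorial) := by
          rw [add_pow, Finset.sum_mul]
          apply Finset.sum_congr rfl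
          intro j _
          simp only [one_pow]
          ring
        rw [this, Nat.factorial_succ]
        push_cast
        have hn : (n : ℝ) + 1 ≠ 0 := by positivity
        have hf : (n.factorial : ℝ) ≠ 0 := by positivity
        field_simp
        ring
      · have hb : ∑ j ∈ Finset.range (k + 1), (k.choose j : ℝ) * s j ≤
            ∑ j ∈ Finset.range (k + 1), (k.factorial : ℝ) * M ^ k * (1 ^ (k - j) / (k - j).factorial) := by
          apply Finset.sum_le_sum
          intro j hj
          have hj : j ≤ k := by simpa [Nat.lt_succ_iff] using hj
          calc (k.choose j : ℝ) * s j ≤ k.choose j * (j.factorial * M ^ k) := by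
                gcongr
                exact (hs j hj).2.trans (by gcongr)
            _ = _ := by
                rw [← Nat.choose_mul_factorial_mul_factorial hj]
                have hf : ((k - j).factorial : ℝ) ≠ 0 := by positivity
                push_cast
                field_simp
                simp
        have hr := Finset.sum_range_reflect (fun i => (1 : ℝ) ^ i / (i.factorial : ℝ)) (k + 1)
        simp only [Nat.add_sub_cancel] at hr
        rw [← Finset.mul_sum, hr] at hb
        have he := Real.sum_le_exp_of_nonneg (zero_le_one) (k + 1)
        calc _ ≤ lam * ((k.factorial : ℝ) * M ^ k * Real.exp 1) := by
              gcongr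
              exact hb.trans (by gcongr)
          _ = (lam * Real.exp 1) * (k.factorial * M ^ k) := by ring
          _ ≤ M * (k.factorial * M ^ k) := by gcongr
          _ = k.factorial * M ^ (k + 1) := by ring
          _ ≤ _ := by
              gcongr
              omega

/-- Moment bound for a Poisson random variable: if `X ~ Poisson(λ)` with `λ > 0`
and `M = max 1 (λ * e)`, then `E[X^k] ≤ k! * M^k`, where the expectation is
written as the sum `∑ n, n^k * P(X = n)` with `P(X = n) = exp(-λ) λ^n / n!`. -/
theorem poisson_moment_bound (lam : ℝ) (hlam : 0 < lam) (M : ℝ)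
    (hM : M = max 1 (lam * Real.exp 1)) (k : ℕ) :
    ∑' n : ℕ, (n : ℝ) ^ k * (Real.exp (-lam) * lam ^ n / n.factorial) ≤
      (k.factorial : ℝ) * M ^ k := by
  obtain ⟨s, hs, hb⟩ := poisson_moment_aux lam hlam M (hM ▸ le_max_left _ _)
    (hM ▸ le_max_right _ _) k
  rw [hs.tsum_eq]
  exact hb
end

section
/- Let d ≥ 1 and let u, v ∈ ℝ^d have nonnegative coordinates. Denote by ‖·‖ the ℓ¹ norm on ℝ^d, i.e., ‖x‖ = Σ_{i=1}^d |x_i|. Then ‖ u/(1+‖u‖) − v/(1+‖v‖) ‖ ≤ ‖u − v‖ + 2‖u − v‖/(1 + ‖v‖). -/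
/-- Intermediate inequality in the proof of Lemma 1: for nonnegative vectors `u, v ∈ ℝ^d`
and the ℓ¹ norm `‖x‖ = ∑ i, |x i|`, one has
`‖u/(1+‖u‖) - v/(1+‖v‖)‖ ≤ ‖u - v‖ + 2‖u - v‖/(1 + ‖v‖)`. -/
theorem normalized_weights_diff_bound (d : ℕ) (hd : 1 ≤ d) (u v : Fin d → ℝ)
    (hu : ∀ i, 0 ≤ u i) (hv : ∀ i, 0 ≤ v i) :
    ∑ i, |u i / (1 + ∑ j, |u j|) - v i / (1 + ∑ j, |v j|)| ≤
      (∑ i, |u i - v i|) + 2 * (∑ i, |u i - v i|) / (1 + ∑ j, |v j|) := by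
  have hU : 0 ≤ ∑ j, |u j| := Finset.sum_nonneg fun _ _ => abs_nonneg _
  have hV : 0 ≤ ∑ j, |v j| := Finset.sum_nonneg fun _ _ => abs_nonneg _
  have hD : 0 ≤ ∑ j, |u j - v j| := Finset.sum_nonneg fun _ _ => abs_nonneg _
  have hUV : |(∑ j, |v j|) - (∑ j, |u j|)| ≤ ∑ j, |u j - v j| := by
    rw [← Finset.sum_sub_distrib]
    refine (Finset.abs_sum_le_sum_abs _ _).trans (Finset.sum_le_sum fun j _ => ?_)
    rw [abs_sub_comm (u j)]
    exact abs_abs_sub_abs_le _ _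
  have key : ∀ i, |u i / (1 + ∑ j, |u j|) - v i / (1 + ∑ j, |v j|)| ≤
      |u i - v i| / (1 + ∑ j, |v j|) +
      |u i| * ((∑ j, |u j - v j|) / ((1 + ∑ j, |u j|) * (1 + ∑ j, |v j|))) := by
    intro i
    generalize (∑ j, |u j|) = U at *
    generalize (∑ j, |v j|) = V at *
    generalize (∑ j, |u j - v j|) = D at *
    have ha : 0 < 1 + U := by linarith
    have hb : 0 < 1 + V := by linarith
    have e : u i / (1 + U) - v i / (1 + V) =
        (u i - v i) / (1 + V) + u i * ((V - U) / ((1 + U) * (1 + V))) := by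
      field_simp
      ring
    rw [e]
    refine (abs_add_le _ _).trans ?_
    rw [abs_div, abs_mul, abs_div, abs_of_pos hb, abs_of_pos (mul_pos ha hb)]
    gcongr
  refine (Finset.sum_le_sum fun i _ => key i).trans ?_
  rw [Finset.sum_add_distrib, ← Finset.sum_div, ← Finset.sum_mul]
  generalize (∑ j, |u j|) = U at *
  generalize (∑ j, |v j|) = V at *
  generalize (∑ j, |u j - v j|) = D at *
  have ha : 0 < 1 + U := by linarith
  have hb : 0 < 1 + V := by linarith
  have h1 : U * (D / ((1 + U) * (1 + V))) ≤ D / (1 + V) := by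
    have e : U * (D / ((1 + U) * (1 + V))) = (U / (1 + U)) * (D / (1 + V)) := by
      field_simp
    rw [e]
    exact mul_le_of_le_one_left (by positivity) ((div_le_one ha).2 (by linarith))
  have h2 : 2 * D / (1 + V) = D / (1 + V) + D / (1 + V) := by ring
  linarith
end

section
/- Let d ≥ 1 and let u, v ∈ ℝ^d have nonnegative coordinates. Denote by ‖·‖ the ℓ¹ norm on ℝ^d. Then ‖ u/(1+‖u‖) − v/(1+‖v‖) ‖ ≤ 3‖u − v‖; that is, the normalization map w ↦ w/(1+‖w‖₁) is 3-Lipschitz on the nonnegative orthant with respect to the ℓ¹ norm. -/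
/-- The normalization map `w ↦ w/(1 + ‖w‖₁)` is 3-Lipschitz on the nonnegative orthant
for the ℓ¹ norm `‖x‖ = ∑ i, |x i|`:
`‖u/(1+‖u‖) - v/(1+‖v‖)‖ ≤ 3‖u - v‖`. -/
theorem normalization_three_lipschitz (d : ℕ) (hd : 1 ≤ d) (u v : Fin d → ℝ)
    (hu : ∀ i, 0 ≤ u i) (hv : ∀ i, 0 ≤ v i) :
    ∑ i, |u i / (1 + ∑ j, |u j|) - v i / (1 + ∑ j, |v j|)| ≤
      3 * ∑ i, |u i - v i| := by
  have ha : 0 ≤ ∑ j, |u j| := Finset.sum_nonneg fun i _ => abs_nonneg _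
  have hb : 0 ≤ ∑ j, |v j| := Finset.sum_nonneg fun i _ => abs_nonneg _
  have hD : 0 ≤ ∑ j, |u j - v j| := Finset.sum_nonneg fun i _ => abs_nonneg _
  have hab : |(∑ j, |v j|) - (∑ j, |u j|)| ≤ ∑ j, |u j - v j| := by
    rw [← Finset.sum_sub_distrib]
    refine (Finset.abs_sum_le_sum_abs _ _).trans (Finset.sum_le_sum fun i _ => ?_)
    rw [abs_sub_comm (u i)]
    exact abs_abs_sub_abs_le_abs_sub _ _
  generalize hA : ∑ j, |u j| = a at *
  generalize hB : ∑ j, |v j| = b at *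
  generalize hDD : ∑ j, |u j - v j| = D at *
  have key : ∀ i, |u i / (1 + a) - v i / (1 + b)| ≤ |u i - v i| + |v i| * (D / (1 + b)) := by
    intro i
    have e : u i / (1 + a) - v i / (1 + b)
        = (u i - v i) / (1 + a) + v i * ((b - a) / (1 + b) / (1 + a)) := by
      field_simp
      ring
    rw [e]
    refine (abs_add_le _ _).trans (add_le_add ?_ ?_)
    · rw [abs_div, abs_of_pos (by linarith : 0 < 1 + a)]
      exact div_le_self (abs_nonneg _) (by linarith)
    · rw [abs_mul, abs_div, abs_div, abs_of_pos (by linarith : 0 < 1 + a),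
        abs_of_pos (by linarith : 0 < 1 + b)]
      refine mul_le_mul_of_nonneg_left ?_ (abs_nonneg _)
      refine (div_le_self (by positivity) (by linarith)).trans ?_
      gcongr
  refine (Finset.sum_le_sum fun i _ => key i).trans ?_
  rw [Finset.sum_add_distrib, ← Finset.sum_mul, hB, hDD]
  have : b * (D / (1 + b)) ≤ D := by
    rw [← mul_div_assoc, div_le_iff₀ (by linarith)]
    nlinarith
  linarith
end

section
/- Let d ≥ 1, p ≥ 1, let τ, τ_s, ρ be real numbers with 0 ≤ 3τ_s τ ≤ ρ < 1, let s : ℕ → ℝ be positive with s(t)/s(t−1) ≤ τ_s for all t ≥ 1, and let φ : ℝ × ℝ^p → ℝ be nonnegative and such that for every θ ∈ ℝ^p the map x ↦ φ(x, θ) is τ-Lipschitz. For t ≥ 1, θ = (θ_1,…,θ_d) ∈ (ℝ^p)^d and X ∈ ℝ^d, define the Poisson parameter vector Λ_t(X) ∈ ℝ^d by Λ_t(X)_i = s(t) · φ(X_i/s(t−1), θ_i) / (1 + Σ_{j=1}^d φ(X_j/s(t−1), θ_j)). Then for all X, X' ∈ ℝ^d and all t ≥ 1, ‖Λ_t(X)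 − Λ_t(X')‖₁ ≤ ρ ‖X − X'‖₁. -/
theorem normalized_l1_aux {d : ℕ} (a b : Fin d → ℝ) (ha : ∀ i, 0 ≤ a i) (hb : ∀ i, 0 ≤ b i)
    (c : ℝ) (hc : 0 < c) :
    ∑ i, |c * a i / (1 + ∑ j, a j) - c * b i / (1 + ∑ j, b j)| ≤ c * (2 * ∑ i, |a i - b i|) := by
  have hA0 : 0 ≤ ∑ j, a j := Finset.sum_nonneg fun i _ => ha i
  have hB0 : 0 ≤ ∑ j, b j := Finset.sum_nonneg fun i _ => hb i
  have hAB : |(∑ j, b j) - ∑ j, a j| ≤ ∑ i, |a i - b i| := by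
    rw [abs_sub_comm, ← Finset.sum_sub_distrib]
    exact Finset.abs_sum_le_sum_abs _ _
  have hD0 : 0 ≤ ∑ i, |a i - b i| := Finset.sum_nonneg fun i _ => abs_nonneg _
  have hBsum : ∑ i, b i / (1 + ∑ j, b j) ≤ 1 := by
    rw [← Finset.sum_div, div_le_one (by linarith)]
    linarith
  set A := ∑ j, a j with hA
  set B := ∑ j, b j with hB
  set D := ∑ i, |a i - b i| with hD
  have key : ∀ i, |c * a i / (1 + A) - c * b i / (1 + B)|
      ≤ c * (|a i - b i| + b i / (1 + B) * D) := by
    intro i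
    have h1 : (0 : ℝ) < 1 + A := by linarith
    have h2 : (0 : ℝ) < 1 + B := by linarith
    have e : c * a i / (1 + A) - c * b i / (1 + B)
        = c * ((a i - b i) / (1 + A) + b i / (1 + B) * ((B - A) / (1 + A))) := by
      field_simp
      ring
    rw [e, abs_mul, abs_of_pos hc]
    refine mul_le_mul_of_nonneg_left ?_ hc.le
    refine (abs_add_le _ _).trans (add_le_add ?_ ?_)
    · rw [abs_div, abs_of_pos h1]
      exact div_le_self (abs_nonneg _) (by linarith)
    · have h3 : 0 ≤ b i / (1 + B) := div_nonneg (hb i) h2.le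
      rw [abs_mul, abs_of_nonneg h3]
      refine mul_le_mul_of_nonneg_left ?_ h3
      rw [abs_div, abs_of_pos h1]
      exact (div_le_self (abs_nonneg _) (by linarith)).trans hAB
  refine (Finset.sum_le_sum fun i _ => key i).trans ?_
  rw [← Finset.mul_sum, Finset.sum_add_distrib, ← Finset.sum_mul, ← hD]
  refine mul_le_mul_of_nonneg_left ?_ hc.le
  nlinarith

/-- Contraction of the Poisson intensity map (deterministic core of Lemma 1):
under the conditions `0 ≤ 3 τ_s τ ≤ ρ < 1`, `s(t)/s(t-1) ≤ τ_s`, `φ ≥ 0` and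
`x ↦ φ(x, θ)` `τ`-Lipschitz, the map
`Λ_t(X)_i = s(t) φ(X_i/s(t-1), θ_i) / (1 + ∑_j φ(X_j/s(t-1), θ_j))`
satisfies `‖Λ_t(X) - Λ_t(X')‖₁ ≤ ρ ‖X - X'‖₁`. -/
theorem intensity_map_contraction (d p : ℕ) (hd : 1 ≤ d) (hp : 1 ≤ p)
    (τ τs ρ : ℝ) (h0 : 0 ≤ 3 * τs * τ) (hρ : 3 * τs * τ ≤ ρ) (hρ1 : ρ < 1)
    (s : ℕ → ℝ) (hs : ∀ t, 0 < s t) (hss : ∀ t, 1 ≤ t → s t / s (t - 1) ≤ τs)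
    (φ : ℝ → (Fin p → ℝ) → ℝ) (hφ0 : ∀ x θ, 0 ≤ φ x θ)
    (hφlip : ∀ (θ : Fin p → ℝ) (x y : ℝ), |φ x θ - φ y θ| ≤ τ * |x - y|)
    (θ : Fin d → Fin p → ℝ) (t : ℕ) (ht : 1 ≤ t) (X X' : Fin d → ℝ) :
    ∑ i, |s t * φ (X i / s (t - 1)) (θ i) / (1 + ∑ j, φ (X j / s (t - 1)) (θ j)) -
          s t * φ (X' i / s (t - 1)) (θ i) / (1 + ∑ j, φ (X' j / s (t - 1)) (θ j))| ≤
      ρ * ∑ i, |X i - X' i| := by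
  have hτ : 0 ≤ τ := by
    have := (abs_nonneg _).trans (hφlip (fun _ => 0) 1 0)
    simpa using this
  have hu := hs (t - 1)
  refine (normalized_l1_aux (fun i => φ (X i / s (t - 1)) (θ i))
    (fun i => φ (X' i / s (t - 1)) (θ i)) (fun i => hφ0 _ _) (fun i => hφ0 _ _)
    (s t) (hs t)).trans ?_
  have hS : 0 ≤ ∑ i, |X i - X' i| := Finset.sum_nonneg fun i _ => abs_nonneg _
  have hL : ∑ i, |φ (X i / s (t - 1)) (θ i) - φ (X' i / s (t - 1)) (θ i)|
      ≤ τ / s (t - 1) * ∑ i, |X i - X' i| := by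
    rw [Finset.mul_sum]
    refine Finset.sum_le_sum fun i _ => (hφlip _ _ _).trans (le_of_eq ?_)
    rw [← sub_div, abs_div, abs_of_pos hu]
    ring
  have h1 : s t / s (t - 1) * τ ≤ τs * τ := mul_le_mul_of_nonneg_right (hss t ht) hτ
  calc s t * (2 * ∑ i, |φ (X i / s (t - 1)) (θ i) - φ (X' i / s (t - 1)) (θ i)|)
      ≤ s t * (2 * (τ / s (t - 1) * ∑ i, |X i - X' i|)) :=
        mul_le_mul_of_nonneg_left (by linarith) (hs t).le
    _ = (2 * (s t / s (t - 1) * τ)) * ∑ i, |X i - X' i| := by ring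
    _ ≤ ρ * ∑ i, |X i - X' i| := mul_le_mul_of_nonneg_right (by linarith) hS
end
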